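/- Let w be a Kreweras word of length 3n. Then for every i ∈ {1,…,3n}, ε_{evac(w)}(i) = −ε_w(3n+1−i), where −B := C and −C := B. -/

import Mathlib

/-- The three letters of a Kreweras word. -/
inductive KLetter : Type
  | A | B | C
deriving DecidableEq, Repr

open KLetter

/-- `w` is a Kreweras word of length `3 * n`: it has `n` `A`'s, `n` `B`'s, `n` `C`'s,
and every prefix has at least as many `A`'s as `B`'s and at least as many `A`'s as `C`'s. -/
def IsKrewerasWord (n : ℕ) (w : List KLetter) : Prop :=
  w.length = 3 * n ∧ w.count A = n ∧ w.count B = n ∧ w.count C = n ∧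
  ∀ k : ℕ, (w.take k).count B ≤ (w.take k).count A ∧
           (w.take k).count C ≤ (w.take k).count A

/-- `kiota w` is the smallest index `ι ≥ 1` (1-indexed) such that the prefix of
length `ι` of `w` has equally many `A`'s as `B`'s, or equally many `A`'s as `C`'s
(and `0` if no such index exists). -/
def kiota (w : List KLetter) : ℕ :=
  (((List.range (w.length + 1)).filter fun k =>
      decide (1 ≤ k) &&
      (((w.take k).count A == (w.take k).count B) ||
       ((w.take k).count A == (w.take k).count C))).headD 0)

/-- Promotion of a Kreweras word:
`pro w = (w₂, …, w_{ι-1}, A, w_{ι+1}, …, w_{3n}, w_ι)` where `ι = kiota w`. -/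
def pro (w : List KLetter) : List KLetter :=
  ((w.drop 1).set (kiota w - 2) A) ++ [w.getD (kiota w - 1) A]

/-- The trip permutation `σ_w` of a Kreweras word of length `3 * n`, as a function on
1-indexed positions: `σ_w i` is the unique element of `{1, …, 3n}` congruent to
`kiota (pro^[i-1] w) + i - 1` modulo `3 * n`. -/
def ksigma (n : ℕ) (w : List KLetter) (i : ℕ) : ℕ :=
  (kiota (pro^[i - 1] w) + i - 2) % (3 * n) + 1

/-- `keps w i` is the letter of `pro^[i-1] w` in (1-indexed) position `kiota (pro^[i-1] w)`. -/
def keps (w : List KLetter) (i : ℕ) : KLetter :=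
  (pro^[i - 1] w).getD (kiota (pro^[i - 1] w) - 1) A

/-- The negation swapping `B` and `C` (and fixing `A`). -/
def negL : KLetter → KLetter
  | A => A
  | B => C
  | C => B

open Classical in
/-- The involution `τ_i` on Kreweras words of length `3 * n`: swap the letters in
(1-indexed) positions `i` and `i + 1` if the result is again a Kreweras word,
and otherwise do nothing. -/
noncomputable def tau (n i : ℕ) (w : List KLetter) : List KLetter :=
  let w' := (w.set (i - 1) (w.getD i A)).set i (w.getD (i - 1) A)
  if IsKrewerasWord n w' then w' else w

/-- `tauDown n j = τ_j ∘ τ_{j-1} ∘ ⋯ ∘ τ_1`. -/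
noncomputable def tauDown (n : ℕ) : ℕ → List KLetter → List KLetter
  | 0, w => w
  | j + 1, w => tau n (j + 1) (tauDown n j w)

/-- `evacAux n j = (tauDown n 1) ∘ (tauDown n 2) ∘ ⋯ ∘ (tauDown n j)`. -/
noncomputable def evacAux (n : ℕ) : ℕ → List KLetter → List KLetter
  | 0, w => w
  | j + 1, w => evacAux n j (tauDown n (j + 1) w)

/-- Evacuation on Kreweras words of length `3 * n`:
`evac = (τ_1) ∘ (τ_2 ∘ τ_1) ∘ ⋯ ∘ (τ_{3n-1} ∘ ⋯ ∘ τ_2 ∘ τ_1)`. -/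
noncomputable def evac (n : ℕ) (w : List KLetter) : List KLetter :=
  evacAux n (3 * n - 1) w

/-- `tauAsc n k c = τ_{k+c-1} ∘ ⋯ ∘ τ_{k+1} ∘ τ_k`. -/
noncomputable def tauAsc (n k : ℕ) : ℕ → List KLetter → List KLetter
  | 0, w => w
  | j + 1, w => tau n (k + j) (tauAsc n k j w)

/-- `evacStarAux n j = (tauAsc n 1 (3n-1)) ∘ (tauAsc n 2 (3n-2)) ∘ ⋯ ∘ (tauAsc n j (3n-j))`. -/
noncomputable def evacStarAux (n : ℕ) : ℕ → List KLetter → List KLetter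
  | 0, w => w
  | j + 1, w => evacStarAux n j (tauAsc n (j + 1) (3 * n - (j + 1)) w)

/-- Dual evacuation on Kreweras words of length `3 * n`:
`evac* = (τ_{3n-1} ∘ ⋯ ∘ τ_1) ∘ (τ_{3n-1} ∘ ⋯ ∘ τ_2) ∘ ⋯ ∘ (τ_{3n-1})`. -/
noncomputable def evacStar (n : ℕ) (w : List KLetter) : List KLetter :=
  evacStarAux n (3 * n - 1) w

/-- The three-element "V"-shaped poset: `a < b`, `a < c`, with `b`, `c` incomparable. -/
inductive VP : Type
  | a | b | c
deriving DecidableEq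

instance : PartialOrder VP where
  le x y := x = y ∨ x = VP.a
  le_refl x := Or.inl rfl
  le_trans x y z hxy hyz := by
    rcases hxy with rfl | rfl
    · exact hyz
    · exact Or.inr rfl
  le_antisymm x y hxy hyx := by
    rcases hxy with rfl | rfl
    · rfl
    · rcases hyx with rfl | rfl <;> rfl

/-- The labeling of elements of `V(n) = VP × Fin n` by letters. -/
def vlabel {n : ℕ} (p : VP × Fin n) : KLetter :=
  match p.1 with
  | VP.a => A
  | VP.b => B
  | VP.c => C

/-- `L` is a linear extension of `V(n) = VP × Fin n` (with the product order):
a list of all elements of `V(n)`, each appearing once, such that `L_i ≤ L_j`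
implies `i ≤ j`. -/
def IsLinearExtension (n : ℕ) (L : List (VP × Fin n)) : Prop :=
  L.Nodup ∧ (∀ p : VP × Fin n, p ∈ L) ∧
  ∀ i j : Fin L.length, L.get i ≤ L.get j → (i : ℕ) ≤ (j : ℕ)

/-- A connected Kreweras word: a Kreweras word of length `3 * n` having no proper
nonempty consecutive substring which is itself a Kreweras word. -/
def ConnectedKrewerasWord (n : ℕ) (w : List KLetter) : Prop :=
  IsKrewerasWord n w ∧
  ∀ (u : List KLetter) (m : ℕ), u <:+: w → u ≠ [] → u ≠ w → ¬ IsKrewerasWord m u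

/-!
For involutions `t i` of which `t i` and `t j` commute whenever `|i - j| > 1`, Schützenberger's
argument shows that evacuation conjugates promotion to its inverse. On Kreweras words `pro` is the
composite of all the `tau`s: they push the initial `A` to the right up to the first return, where
it gets stuck, and then push the letter of the first return to the end of the word, so that
`keps w i` is the last letter of `pro^[i] w`. As the last letter of `evac n w` is that of `pro w`,
conjugation identifies `keps (evac n w) i` with the last letter of the word `v` such that
`pro^[i - 1] v = w`, whereas `keps w (3 * n + 1 - i)` is the last letter of `pro^[3 * n] v`.

It remains to see that `pro^[3 * n]` negates the last letter. Give each suffix of a word a colour: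
`negL X` if it starts with a letter `X ≠ A`, and the letter of its first return if it starts with
`A`. Promotion moves letters one step to the left and keeps the colours of the suffixes that they
start; when it turns the letter `L` of the first return into an `A`, the new `A` returns at
`negL L`. So the last letter `L` has become an `A` of colour `negL L` when it reaches the front.
-/

section PromotionEvacuation

variable {M : Type*} [Monoid M] (t : ℕ → M)

/-- The abstract promotion `t (k - 1) * ⋯ * t 1 * t 0` attached to a sequence `t` of elements of a
monoid. -/
def promotionProd : ℕ → M
  | 0 => 1
  | k + 1 => t k * promotionProd k

/-- The abstract evacuation `(t 0) * (t 1 * t 0) * ⋯ * (t (k - 1) * ⋯ * t 0)` attached to a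
sequence `t` of elements of a monoid. -/
def evacuationProd : ℕ → M
  | 0 => 1
  | k + 1 => evacuationProd k * promotionProd t (k + 1)

variable {t}

theorem commute_promotionProd (hcomm : ∀ i j, i + 1 < j → Commute (t i) (t j)) {k j : ℕ}
    (hkj : k < j) : Commute (t j) (promotionProd t k) := by
  induction k with
  | zero => exact Commute.one_right _
  | succ k ih => exact (hcomm k j hkj).symm.mul_right (ih (by lia))

theorem commute_evacuationProd (hcomm : ∀ i j, i + 1 < j → Commute (t i) (t j)) {k j : ℕ}
    (hkj : k < j) : Commute (t j) (evacuationProd t k) := by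
  induction k with
  | zero => exact Commute.one_right _
  | succ k ih => exact (ih (by lia)).mul_right (commute_promotionProd hcomm hkj)

theorem promotionProd_mul_evacuationProd (hinv : ∀ i, t i * t i = 1)
    (hcomm : ∀ i j, i + 1 < j → Commute (t i) (t j)) (k : ℕ) :
    promotionProd t (k + 1) * evacuationProd t (k + 1) = evacuationProd t k := by
  induction k with
  | zero => simp [promotionProd, evacuationProd, hinv]
  | succ k ih =>
    calc t (k + 1) * promotionProd t (k + 1) *
          (evacuationProd t (k + 1) * promotionProd t (k + 2))
        = t (k + 1) * evacuationProd t k * promotionProd t (k + 2) := by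
          rw [← ih]; simp only [mul_assoc]
      _ = evacuationProd t k * (t (k + 1) * t (k + 1) * promotionProd t (k + 1)) := by
          rw [(commute_evacuationProd hcomm k.lt_succ_self).eq, promotionProd]
          simp only [mul_assoc]
      _ = evacuationProd t (k + 1) := by rw [hinv, one_mul, evacuationProd]

theorem semiconjBy_evacuationProd {G : Type*} [Group G] {t : ℕ → G} (hinv : ∀ i, t i * t i = 1)
    (hcomm : ∀ i j, i + 1 < j → Commute (t i) (t j)) (k : ℕ) :
    SemiconjBy (evacuationProd t k) (promotionProd t k) (promotionProd t k)⁻¹ := by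
  rw [SemiconjBy, eq_inv_mul_iff_mul_eq, ← mul_assoc]
  cases k with
  | zero => simp [promotionProd, evacuationProd]
  | succ k => rw [promotionProd_mul_evacuationProd hinv hcomm, evacuationProd]

end PromotionEvacuation

/-- Every prefix contains at least as many `A`s as any other letter. -/
def IsBallot (l : List KLetter) : Prop :=
  ∀ p, p <+: l → ∀ X, p.count X ≤ p.count A

theorem isBallot_nil : IsBallot [] := by
  simp [IsBallot]

theorem isBallot_append_singleton {l : List KLetter} {x : KLetter} :
    IsBallot (l ++ [x]) ↔ IsBallot l ∧ ∀ X, (l ++ [x]).count X ≤ (l ++ [x]).count A := by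
  simp [IsBallot, List.prefix_concat_iff, or_imp, forall_and, and_comm]

namespace IsBallot

variable {l m p q u : List KLetter} {a b x : KLetter}

theorem of_prefix (hl : IsBallot l) (hp : p <+: l) : IsBallot p :=
  fun _ hr ↦ hl _ (hr.trans hp)

theorem count_le (hl : IsBallot l) (X : KLetter) : l.count X ≤ l.count A :=
  hl l List.prefix_rfl X

theorem append_singleton_iff (hl : IsBallot l) :
    IsBallot (l ++ [x]) ↔ x = A ∨ l.count x < l.count A := by
  rw [isBallot_append_singleton, and_iff_right hl]
  have hcount := hl.count_le
  constructor
  · intro h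
    have := h x
    grind [List.count_singleton]
  · intro h X
    have := hcount X
    grind [List.count_singleton]

theorem head_eq (hl : IsBallot (x :: l)) : x = A := by
  have h : IsBallot ([] ++ [x]) := hl.of_prefix ⟨l, rfl⟩
  exact (isBallot_nil.append_singleton_iff.1 h).resolve_right (by simp)

theorem append_iff_of_perm (hl : IsBallot l) (hm : IsBallot m) (hlm : l.Perm m) :
    IsBallot (l ++ q) ↔ IsBallot (m ++ q) := by
  induction q using List.reverseRecOn with
  | nil => simp [hl, hm]
  | append_singleton q x ih =>
    simp only [← List.append_assoc, isBallot_append_singleton, ih,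
      ((hlm.append_right q).append_right [x]).count_eq]

theorem swap (h : IsBallot (p ++ a :: b :: q)) (hb : IsBallot (p ++ [b])) :
    IsBallot (p ++ b :: a :: q) := by
  have hab : IsBallot (p ++ [a, b]) := h.of_prefix ⟨q, by simp⟩
  have hperm : (p ++ [a, b]).Perm (p ++ [b, a]) := (List.Perm.swap _ _ _).append_left p
  have hba : IsBallot (p ++ [b, a]) := by
    rw [List.append_cons, isBallot_append_singleton]
    simpa [hb, hperm.count_eq] using hab.count_le
  simpa using (hab.append_iff_of_perm hba hperm).1 (by simpa using h)

theorem of_append_cons (h : IsBallot (p ++ x :: q)) (hx : x ≠ A) : IsBallot (p ++ q) := by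
  induction q using List.reverseRecOn with
  | nil => exact h.of_prefix ⟨[x], by simp⟩
  | append_singleton q y ih =>
    rw [← List.cons_append, ← List.append_assoc, isBallot_append_singleton] at h
    rw [← List.append_assoc, isBallot_append_singleton]
    refine ⟨ih h.1, fun X ↦ ?_⟩
    have := h.2 X
    grind

end IsBallot

/-- Appending `L` to the ballot word `u` breaks the ballot condition for the first time.
Equivalently, in any word starting with `A :: (u ++ [L])` the number of `A`s is first equalled by
that of another letter at this `L`, so that `kiota` points at `L`. -/
structure IsFirstReturn (u : List KLetter) (L : KLetter) : Prop where
  isBallot : IsBallot u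
  ne_A : L ≠ A
  count_eq : u.count L = u.count A

theorem exists_isFirstReturn {s : List KLetter} (hs : ¬ IsBallot s) :
    ∃ u L v, s = u ++ L :: v ∧ IsFirstReturn u L := by
  induction s using List.reverseRecOn with
  | nil => exact absurd isBallot_nil hs
  | append_singleton s x ih =>
    by_cases h : IsBallot s
    · rw [h.append_singleton_iff, not_or, not_lt] at hs
      exact ⟨s, x, [], rfl, h, hs.1, (h.count_le x).antisymm hs.2⟩
    · obtain ⟨u, L, v, rfl, hL⟩ := ih h
      exact ⟨u, L, v ++ [x], by simp, hL⟩

namespace IsFirstReturn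

variable {u : List KLetter} {L : KLetter}

theorem not_isBallot (h : IsFirstReturn u L) : ¬ IsBallot (u ++ [L]) := by
  simp [h.isBallot.append_singleton_iff, h.ne_A, h.count_eq]

theorem kiota_eq (h : IsFirstReturn u L) (v : List KLetter) :
    kiota (A :: (u ++ L :: v)) = u.length + 2 := by
  rw [kiota, List.headD_eq_head?_getD, List.head?_filter,
    List.find?_range_eq_some (i := u.length + 2) |>.2 ⟨?_, by simp, ?_⟩, Option.getD_some]
  · have htake : (A :: (u ++ L :: v)).take (u.length + 2) = A :: u ++ [L] := by
      simp [List.take_append]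
    have hcount : (A :: u ++ [L]).count A = (A :: u ++ [L]).count L := by
      simp [h.ne_A, h.ne_A.symm, h.count_eq]
    rw [htake, hcount]
    cases L
    · exact absurd rfl h.ne_A
    all_goals simp
  · rintro (_ | j) hj
    · simp
    · have htake : (A :: (u ++ L :: v)).take (j + 1) = A :: u.take j := by
        simp [List.take_append_of_le_length (show j ≤ u.length by lia)]
      have hle := h.isBallot _ (List.take_prefix j u)
      have hB := hle B
      have hC := hle C
      rw [htake]
      simp
      lia

theorem keps_one (h : IsFirstReturn u L) (v : List KLetter) :
    keps (A :: (u ++ L :: v)) 1 = L := by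
  simp [keps, h.kiota_eq]

theorem pro_eq (h : IsFirstReturn u L) (v : List KLetter) :
    pro (A :: (u ++ L :: v)) = u ++ A :: v ++ [L] := by
  simp [pro, h.kiota_eq]

end IsFirstReturn

theorem isKrewerasWord_iff {n : ℕ} {w : List KLetter} :
    IsKrewerasWord n w ↔ (∀ X, w.count X = n) ∧ IsBallot w := by
  have hlen : w.length = w.count A + w.count B + w.count C := by
    induction w with
    | nil => rfl
    | cons x w ih => cases x <;> simp [ih] <;> lia
  constructor
  · rintro ⟨-, hA, hB, hC, hprefix⟩
    refine ⟨fun X ↦ by cases X <;> assumption, fun p hp X ↦ ?_⟩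
    rw [List.prefix_iff_eq_take.1 hp]
    cases X
    exacts [le_rfl, (hprefix _).1, (hprefix _).2]
  · rintro ⟨hcount, hw⟩
    have hprefix (k : ℕ) := hw _ (List.take_prefix k w)
    exact ⟨by rw [hlen, hcount, hcount, hcount]; lia, hcount A, hcount B, hcount C,
      fun k ↦ ⟨hprefix k B, hprefix k C⟩⟩

namespace IsKrewerasWord

variable {n : ℕ} {w : List KLetter}

theorem length_eq (hw : IsKrewerasWord n w) : w.length = 3 * n :=
  hw.1

theorem count_eq (hw : IsKrewerasWord n w) (X : KLetter) : w.count X = n :=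
  (isKrewerasWord_iff.1 hw).1 X

theorem isBallot (hw : IsKrewerasWord n w) : IsBallot w :=
  (isKrewerasWord_iff.1 hw).2

theorem of_perm {w' : List KLetter} (hw : IsKrewerasWord n w) (hperm : w.Perm w')
    (hw' : IsBallot w') : IsKrewerasWord n w' :=
  isKrewerasWord_iff.2 ⟨fun X ↦ by rw [← hperm.count_eq, hw.count_eq], hw'⟩

theorem swap_iff {p q : List KLetter} {a b : KLetter} (hw : IsKrewerasWord n (p ++ a :: b :: q)) :
    IsKrewerasWord n (p ++ b :: a :: q) ↔ IsBallot (p ++ [b]) :=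
  ⟨fun h ↦ h.isBallot.of_prefix ⟨a :: q, by simp⟩,
    fun hb ↦ hw.of_perm ((List.Perm.swap _ _ _).append_left p) (hw.isBallot.swap hb)⟩

theorem exists_eq_cons_append (hn : 0 < n) (hw : IsKrewerasWord n w) :
    ∃ u L v, w = A :: (u ++ L :: v) ∧ IsFirstReturn u L := by
  obtain ⟨x, s, rfl⟩ : ∃ x s, w = x :: s :=
    List.exists_cons_of_length_pos (by rw [hw.length_eq]; lia)
  obtain rfl := hw.isBallot.head_eq
  have hs : ¬ IsBallot s := fun hs ↦ by
    have hA := hw.count_eq A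
    have hB := hw.count_eq B
    have := hs.count_le B
    simp at hA hB
    lia
  obtain ⟨u, L, v, rfl, hL⟩ := exists_isFirstReturn hs
  exact ⟨u, L, v, rfl, hL⟩

end IsKrewerasWord

/-- The word with the letters in (0-indexed) positions `i` and `i + 1` interchanged, when both
positions exist; it is what `tau n (i + 1)` tests for being a Kreweras word. -/
def adjSwap (i : ℕ) (w : List KLetter) : List KLetter :=
  (w.set i (w.getD (i + 1) A)).set (i + 1) (w.getD i A)

open Classical in
theorem tau_succ (n i : ℕ) (w : List KLetter) :
    tau n (i + 1) w = if IsKrewerasWord n (adjSwap i w) then adjSwap i w else w :=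
  rfl

section AdjSwap

variable {w : List KLetter} {i j k : ℕ}

theorem exists_eq_append_cons_cons (hi : i + 1 < w.length) :
    ∃ p a b q, w = p ++ a :: b :: q ∧ p.length = i :=
  ⟨w.take i, w[i], w[i + 1], w.drop (i + 2), by simp, by simp; lia⟩

theorem adjSwap_append (p q : List KLetter) (a b : KLetter) :
    adjSwap p.length (p ++ a :: b :: q) = p ++ b :: a :: q := by
  simp [adjSwap]

theorem length_adjSwap : (adjSwap i w).length = w.length := by
  simp [adjSwap]

theorem adjSwap_adjSwap (hi : i + 1 < w.length) : adjSwap i (adjSwap i w) = w := by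
  obtain ⟨p, a, b, q, rfl, rfl⟩ := exists_eq_append_cons_cons hi
  rw [adjSwap_append, adjSwap_append]

theorem adjSwap_comm (hij : i + 1 < j) : adjSwap i (adjSwap j w) = adjSwap j (adjSwap i w) := by
  apply List.ext_getElem?
  intro k
  grind [adjSwap]

theorem getElem?_adjSwap_of_lt (hk : i + 1 < k) : (adjSwap i w)[k]? = w[k]? := by
  grind [adjSwap]

theorem take_adjSwap_of_le (hk : k ≤ i) : (adjSwap i w).take k = w.take k := by
  rw [adjSwap, List.take_set_of_le (by lia), List.take_set_of_le hk]

theorem take_adjSwap_perm (hi : i + 1 < w.length) (hk : i + 1 < k) :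
    ((adjSwap i w).take k).Perm (w.take k) := by
  obtain ⟨p, a, b, q, rfl, rfl⟩ := exists_eq_append_cons_cons hi
  obtain ⟨k, rfl⟩ := Nat.exists_eq_add_of_lt hk
  rw [adjSwap_append, show p.length + 1 + k + 1 = p.length + (k + 2) by lia]
  simpa [List.take_length_add_append] using (List.Perm.swap a b _).append_left p

theorem adjSwap_perm (hi : i + 1 < w.length) : (adjSwap i w).Perm w := by
  have h := take_adjSwap_perm hi hi
  rwa [List.take_length, List.take_of_length_le length_adjSwap.le] at h

end AdjSwap

section Tau

variable {n : ℕ} {w : List KLetter} {i j : ℕ}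

theorem IsKrewerasWord.tau (hw : IsKrewerasWord n w) (i : ℕ) : IsKrewerasWord n (tau n i w) := by
  unfold _root_.tau
  dsimp only
  split_ifs with h
  exacts [h, hw]

theorem tau_succ_of_le (hw : IsKrewerasWord n w) (hi : 3 * n ≤ i + 1) : tau n (i + 1) w = w := by
  have hlen := hw.length_eq
  have hset : adjSwap i w = w.set i A := by
    rw [adjSwap, List.set_eq_of_length_le (by simp; lia), List.getD_eq_default _ _ (by lia)]
  rw [tau_succ, hset]
  split_ifs with h
  swap
  · rfl
  rcases lt_or_ge i w.length with hi' | hi'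
  · have hcount := h.count_eq A
    have hA : w[i] = A := by
      by_contra hne
      rw [List.count_set hi', hw.count_eq] at hcount
      simp [hne] at hcount
    rw [← hA, List.set_getElem_self]
  · exact List.set_eq_of_length_le hi'

theorem tau_succ_tau_succ (hw : IsKrewerasWord n w) (i : ℕ) :
    tau n (i + 1) (tau n (i + 1) w) = w := by
  rcases lt_or_ge (i + 1) (3 * n) with hi | hi
  · have hinv := adjSwap_adjSwap (hw.length_eq ▸ hi)
    by_cases h : IsKrewerasWord n (adjSwap i w) <;> simp [tau_succ, h, hinv, hw]
  · rw [tau_succ_of_le (hw.tau _) hi, tau_succ_of_le hw hi]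

/-- A prefix of `adjSwap i (adjSwap j w)` is either untouched by `adjSwap j` or, up to order,
untouched by `adjSwap i`. -/
theorem IsKrewerasWord.adjSwap_adjSwap (hi : IsKrewerasWord n (adjSwap i w))
    (hj : IsKrewerasWord n (adjSwap j w)) (hij : i + 1 < j) (hjw : j + 1 < w.length) :
    IsKrewerasWord n (adjSwap i (adjSwap j w)) := by
  have hiw : i + 1 < (adjSwap j w).length := by rw [length_adjSwap]; lia
  refine hj.of_perm (adjSwap_perm hiw).symm fun p hp X ↦ ?_
  rw [List.prefix_iff_eq_take.1 hp]
  rcases le_or_gt p.length j with hpj | hpj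
  · rw [adjSwap_comm hij, take_adjSwap_of_le hpj]
    exact hi.isBallot _ (List.take_prefix _ _) X
  · have hperm := take_adjSwap_perm hiw (hij.trans hpj)
    rw [hperm.count_eq, hperm.count_eq]
    exact hj.isBallot _ (List.take_prefix _ _) X

theorem tau_succ_comm (hw : IsKrewerasWord n w) (hij : i + 1 < j) :
    tau n (i + 1) (tau n (j + 1) w) = tau n (j + 1) (tau n (i + 1) w) := by
  rcases lt_or_ge (j + 1) (3 * n) with hj | hj
  swap
  · rw [tau_succ_of_le hw hj, tau_succ_of_le (hw.tau _) hj]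
  rw [← hw.length_eq] at hj
  have hi : i + 1 < w.length := by lia
  have hcomm := adjSwap_comm (w := w) hij
  by_cases hiK : IsKrewerasWord n (adjSwap i w) <;> by_cases hjK : IsKrewerasWord n (adjSwap j w)
  · have hijK := hiK.adjSwap_adjSwap hjK hij hj
    simp [tau_succ, hiK, hjK, hijK, ← hcomm]
  · have hijK : ¬ IsKrewerasWord n (adjSwap i (adjSwap j w)) := fun h ↦ hjK <| by
      have := IsKrewerasWord.adjSwap_adjSwap (w := adjSwap i w) (i := i) (j := j)
        (by rwa [adjSwap_adjSwap hi]) (by rwa [← hcomm]) hij (by rwa [length_adjSwap])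
      rwa [← hcomm, adjSwap_adjSwap (by rwa [length_adjSwap])] at this
    simp [tau_succ, hiK, hjK, hijK, ← hcomm]
  · have hijK : ¬ IsKrewerasWord n (adjSwap i (adjSwap j w)) := fun h ↦ hiK <| by
      have := IsKrewerasWord.adjSwap_adjSwap (w := adjSwap j w) (i := i) (j := j)
        h (by rwa [adjSwap_adjSwap hj]) hij (by rwa [length_adjSwap])
      rwa [adjSwap_adjSwap hj] at this
    simp [tau_succ, hiK, hjK, hijK]
  · simp [tau_succ, hiK, hjK]

theorem getElem?_tau_of_lt {k : ℕ} (hk : i + 1 < k) : (tau n (i + 1) w)[k]? = w[k]? := by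
  rw [tau_succ]
  split_ifs
  exacts [getElem?_adjSwap_of_lt hk, rfl]

end Tau

/-- The Kreweras words of length `3 * n` as a type, on which promotion and evacuation are
permutations. -/
abbrev KrewerasWord (n : ℕ) : Type :=
  {w : List KLetter // IsKrewerasWord n w}

/-- The involution `tau n (i + 1)` as a permutation of `KrewerasWord n`. -/
noncomputable def toggle (n i : ℕ) : Equiv.Perm (KrewerasWord n) :=
  Function.Involutive.toPerm (fun w ↦ ⟨tau n (i + 1) w, w.2.tau _⟩)
    fun w ↦ Subtype.ext (tau_succ_tau_succ w.2 i)

theorem toggle_mul_self (n i : ℕ) : toggle n i * toggle n i = 1 :=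
  Equiv.ext fun w ↦ Subtype.ext (tau_succ_tau_succ w.2 i)

theorem commute_toggle (n i j : ℕ) (hij : i + 1 < j) : Commute (toggle n i) (toggle n j) :=
  Equiv.ext fun w ↦ Subtype.ext (tau_succ_comm w.2 hij)

section Promotion

variable {n : ℕ}

theorem coe_promotionProd_toggle (k : ℕ) (w : KrewerasWord n) :
    (promotionProd (toggle n) k w : List KLetter) = tauDown n k w := by
  induction k with
  | zero => rfl
  | succ k ih => exact congrArg (tau n (k + 1)) ih

theorem coe_evacuationProd_toggle (k : ℕ) (w : KrewerasWord n) :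
    (evacuationProd (toggle n) k w : List KLetter) = evacAux n k w := by
  induction k generalizing w with
  | zero => rfl
  | succ k ih =>
    rw [evacuationProd, Equiv.Perm.mul_apply, ih, coe_promotionProd_toggle, evacAux]

theorem getElem?_tauDown_of_lt {k m : ℕ} (hkm : k < m) (w : List KLetter) :
    (tauDown n k w)[m]? = w[m]? := by
  induction k with
  | zero => rfl
  | succ k ih => rw [tauDown, getElem?_tau_of_lt hkm, ih (by lia)]

theorem getElem?_evacAux_of_lt {k m : ℕ} (hkm : k < m) (w : List KLetter) :
    (evacAux n k w)[m]? = w[m]? := by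
  induction k generalizing w with
  | zero => rfl
  | succ k ih => rw [evacAux, ih (by lia), getElem?_tauDown_of_lt hkm]

theorem tauDown_eq_tauAsc (k : ℕ) (w : List KLetter) : tauDown n k w = tauAsc n 1 k w := by
  induction k with
  | zero => rfl
  | succ k ih => rw [tauDown, tauAsc, ih, Nat.add_comm 1 k]

theorem tauAsc_add (k c d : ℕ) (w : List KLetter) :
    tauAsc n k (c + d) w = tauAsc n (k + c) d (tauAsc n k c w) := by
  induction d with
  | zero => rfl
  | succ d ih => rw [← Nat.add_assoc, tauAsc, tauAsc, ih, Nat.add_assoc]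

theorem tau_append {p q : List KLetter} {a b : KLetter}
    (hw : IsKrewerasWord n (p ++ a :: b :: q)) [Decidable (IsBallot (p ++ [b]))] :
    tau n (p.length + 1) (p ++ a :: b :: q) =
      if IsBallot (p ++ [b]) then p ++ b :: a :: q else p ++ a :: b :: q := by
  simp only [tau_succ, adjSwap_append, hw.swap_iff]

theorem IsKrewerasWord.tauAsc {w : List KLetter} (hw : IsKrewerasWord n w) (k c : ℕ) :
    IsKrewerasWord n (tauAsc n k c w) := by
  induction c with
  | zero => exact hw
  | succ c ih => exact ih.tau _

theorem tauAsc_append {p u q : List KLetter} {a : KLetter} (hpu : IsBallot (p ++ u))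
    (hw : IsKrewerasWord n (p ++ a :: (u ++ q))) :
    tauAsc n (p.length + 1) u.length (p ++ a :: (u ++ q)) = p ++ u ++ a :: q := by
  classical
  induction u generalizing p with
  | nil => simp [tauAsc]
  | cons x u ih =>
    have hpx : IsBallot (p ++ [x]) := hpu.of_prefix ⟨u, by simp⟩
    have hstep : tauAsc n (p.length + 1) 1 (p ++ a :: x :: (u ++ q)) = p ++ x :: a :: (u ++ q) :=
      (tau_append hw).trans (if_pos hpx)
    rw [List.length_cons, Nat.add_comm u.length, tauAsc_add, List.cons_append, hstep]
    simpa using ih (p := p ++ [x]) (by simpa using hpu) (by simpa using hw.swap_iff.2 hpx)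

theorem tauDown_eq_pro (hn : 0 < n) {w : List KLetter} (hw : IsKrewerasWord n w) :
    tauDown n (3 * n - 1) w = pro w := by
  classical
  obtain ⟨u, L, v, rfl, hL⟩ := hw.exists_eq_cons_append hn
  have huv : IsBallot (u ++ [A] ++ v) := by
    have herase : IsBallot (A :: u ++ v) := hw.isBallot.of_append_cons hL.ne_A
    have huA : IsBallot (u ++ [A]) := hL.isBallot.append_singleton_iff.2 (Or.inl rfl)
    exact ((herase.of_prefix (List.prefix_append _ _)).append_iff_of_perm huA
      (List.perm_append_singleton A u).symm).1 herase
  have hbefore : tauAsc n 1 u.length (A :: (u ++ L :: v)) = u ++ A :: L :: v :=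
    tauAsc_append (p := []) hL.isBallot hw
  have hmid : IsKrewerasWord n (u ++ A :: L :: v) := hbefore ▸ hw.tauAsc 1 u.length
  have hreturn : tauAsc n (u.length + 1) 1 (u ++ A :: L :: v) = u ++ A :: L :: v :=
    (tau_append hmid).trans (if_neg hL.not_isBallot)
  have hafter : tauAsc n (u.length + 2) v.length (u ++ A :: L :: v) = u ++ A :: v ++ [L] := by
    simpa using tauAsc_append (q := []) huv (by simpa using hmid)
  have hlen : 3 * n - 1 = u.length + 1 + v.length := by
    rw [← hw.length_eq]
    simp
    lia
  rw [hL.pro_eq, tauDown_eq_tauAsc, hlen, tauAsc_add, tauAsc_add, hbefore,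
    Nat.add_comm 1 u.length, hreturn, Nat.add_comm 1, hafter]

theorem IsKrewerasWord.pro (hn : 0 < n) {w : List KLetter} (hw : IsKrewerasWord n w) :
    IsKrewerasWord n (pro w) := by
  rw [← tauDown_eq_pro hn hw, tauDown_eq_tauAsc]
  exact hw.tauAsc 1 _

theorem IsKrewerasWord.iterate_pro (hn : 0 < n) {w : List KLetter} (hw : IsKrewerasWord n w)
    (i : ℕ) : IsKrewerasWord n (_root_.pro^[i] w) := by
  induction i generalizing w with
  | zero => exact hw
  | succ _ ih => exact ih (hw.pro hn)

end Promotion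

theorem eq_negL {L X : KLetter} (hL : L ≠ A) (hX : X ≠ A) (hXL : X ≠ L) : X = negL L := by
  cases L <;> cases X <;> simp_all [negL]

theorem negL_ne_A {L : KLetter} (hL : L ≠ A) : negL L ≠ A := by
  cases L <;> simp_all [negL]

theorem negL_ne_self {L : KLetter} (hL : L ≠ A) : negL L ≠ L := by
  cases L <;> simp_all [negL]

theorem negL_negL (L : KLetter) : negL (negL L) = L := by
  cases L <;> rfl

/-- The colour of a suffix of a Kreweras word: the letter of its first return if it starts with
`A`, and the negative of its first letter otherwise. Promotion preserves it as that first letter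
moves to the left. -/
inductive HasColor : List KLetter → KLetter → Prop
  | firstReturn {u : List KLetter} {L : KLetter} (h : IsFirstReturn u L) (v : List KLetter) :
      HasColor (A :: (u ++ L :: v)) L
  | letter {X : KLetter} (hX : X ≠ A) (v : List KLetter) : HasColor (X :: v) (negL X)

namespace HasColor

variable {u v s : List KLetter} {L X : KLetter} {n : ℕ}

theorem ne_nil (hs : HasColor s X) : s ≠ [] := by
  cases hs <;> simp

theorem append_right (hs : HasColor s X) (q : List KLetter) : HasColor (s ++ q) X := by
  cases hs with
  | firstReturn h v => simpa using firstReturn h (v ++ q)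
  | letter hX v => exact letter hX (v ++ q)

/-- The first return of a suffix `A :: s ++ L :: v` lies in `s`: otherwise neither `p` nor `s` would
contain more `L`s than `A`s, so `p ++ A :: s` would contain more `A`s than `L`s. -/
theorem of_append_of_isFirstReturn {p : List KLetter} (h : IsFirstReturn (p ++ s) L) (hs : s ≠ [])
    (hX : HasColor (s ++ L :: v) X) : HasColor s X := by
  obtain ⟨a, s, rfl⟩ := List.exists_cons_of_ne_nil hs
  generalize ht : a :: s ++ L :: v = t at hX
  cases hX with
  | letter hY v' =>
    obtain ⟨rfl, -⟩ := List.cons.inj ht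
    exact letter hY s
  | @firstReturn u' X h' v' =>
    obtain ⟨rfl, htail⟩ := List.cons.inj ht
    have hs_ballot : ¬ IsBallot s := fun hs ↦ by
      have hp := (h.isBallot.of_prefix (List.prefix_append p _)).count_le L
      have := hs.count_le L
      have := h.count_eq
      simp [h.ne_A.symm] at this
      lia
    have hs_prefix : ¬ s <+: u' := fun hsu ↦ hs_ballot (h'.isBallot.of_prefix hsu)
    rcases List.append_eq_append_iff.1 htail with ⟨q, rfl, -⟩ | ⟨_ | ⟨y, q⟩, rfl, hq⟩
    · exact absurd (List.prefix_append s q) hs_prefix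
    · simp at hs_prefix
    · obtain ⟨rfl, -⟩ := List.cons.inj hq
      exact firstReturn h' q

theorem keps_one (hs : IsKrewerasWord n s) (hX : HasColor s X) : keps s 1 = X := by
  cases hX with
  | firstReturn h v => exact h.keps_one v
  | letter hX v => exact absurd hs.isBallot.head_eq hX

end HasColor

/-- A further return at `L` would give a prefix of the word more `L`s than `A`s. -/
theorem IsFirstReturn.hasColor_new {n : ℕ} {u v : List KLetter} {L : KLetter}
    (h : IsFirstReturn u L) (hw : IsKrewerasWord n (A :: (u ++ L :: v))) :
    HasColor (A :: v) (negL L) := by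
  have hne := negL_ne_A h.ne_A
  have hv : ¬ IsBallot v := fun hv ↦ by
    have hA := hw.count_eq A
    have hN := hw.count_eq (negL L)
    have hu := h.isBallot.count_le (negL L)
    have hv := hv.count_le (negL L)
    simp [h.ne_A, hne.symm, (negL_ne_self h.ne_A).symm] at hA hN
    lia
  obtain ⟨u', X, v', rfl, hX⟩ := exists_isFirstReturn hv
  have hXL : X ≠ L := by
    rintro rfl
    have hle := (hw.isBallot.of_prefix (p := A :: (u ++ X :: (u' ++ [X]))) ⟨v', by simp⟩).count_le X
    simp [h.ne_A, h.ne_A.symm, h.count_eq, hX.count_eq] at hle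
    lia
  obtain rfl := eq_negL h.ne_A hX.ne_A hXL
  exact .firstReturn hX v'

theorem HasColor.pro_drop {n m : ℕ} (hn : 0 < n) {w : List KLetter} {X : KLetter}
    (hw : IsKrewerasWord n w) (hX : HasColor (w.drop (m + 1)) X) : HasColor ((pro w).drop m) X := by
  obtain ⟨u, L, v, rfl, h⟩ := hw.exists_eq_cons_append hn
  rw [h.pro_eq]
  rw [List.drop_succ_cons] at hX
  rcases lt_trichotomy m u.length with hm | rfl | hm
  · rw [List.drop_append_of_le_length hm.le] at hX
    rw [List.append_assoc, List.drop_append_of_le_length hm.le]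
    rw [← List.take_append_drop m u] at h
    exact (HasColor.of_append_of_isFirstReturn h (by simpa using hm) hX).append_right _
  · rw [List.append_assoc, List.drop_left]
    rw [List.drop_left] at hX
    cases hX with
    | firstReturn _ _ => exact absurd rfl h.ne_A
    | letter _ _ => exact (h.hasColor_new hw).append_right _
  · obtain ⟨k, rfl⟩ := Nat.exists_eq_add_of_lt hm
    have hk := hX.ne_nil
    simp only [add_assoc, List.append_assoc, List.drop_length_add_append, List.cons_append,
      List.drop_succ_cons, ne_eq, List.drop_eq_nil_iff, not_le] at hX hk ⊢
    rw [List.drop_append_of_le_length hk.le]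
    exact hX.append_right _

theorem HasColor.iterate_pro {n m : ℕ} (hn : 0 < n) {w : List KLetter} {X : KLetter}
    (hw : IsKrewerasWord n w) (hX : HasColor (w.drop m) X) : HasColor (pro^[m] w) X := by
  induction m generalizing w with
  | zero => exact hX
  | succ m ih => exact ih (hw.pro hn) (hX.pro_drop hn hw)

section Permutations

/-- Promotion as a permutation of `KrewerasWord n`; it agrees with `pro` only for `0 < n`, since
`pro [] = [A]`. -/
noncomputable def promotion (n : ℕ) : Equiv.Perm (KrewerasWord n) :=
  promotionProd (toggle n) (3 * n - 1)

/-- Evacuation as a permutation of `KrewerasWord n`. -/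
noncomputable def evacuation (n : ℕ) : Equiv.Perm (KrewerasWord n) :=
  evacuationProd (toggle n) (3 * n - 1)

variable {n : ℕ}

theorem coe_evacuation (w : KrewerasWord n) : (evacuation n w : List KLetter) = evac n w :=
  coe_evacuationProd_toggle _ w

theorem coe_promotion (hn : 0 < n) (w : KrewerasWord n) :
    (promotion n w : List KLetter) = pro w := by
  rw [promotion, coe_promotionProd_toggle, tauDown_eq_pro hn w.2]

theorem coe_promotion_pow (hn : 0 < n) (i : ℕ) (w : KrewerasWord n) :
    ((promotion n ^ i) w : List KLetter) = pro^[i] w := by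
  induction i with
  | zero => rfl
  | succ i ih =>
    rw [pow_succ', Equiv.Perm.mul_apply, coe_promotion hn, ih, Function.iterate_succ_apply']

theorem promotion_pow_mul_evacuation (n i : ℕ) :
    promotion n ^ i * evacuation n = evacuation n * (promotion n ^ i)⁻¹ := by
  have h : SemiconjBy (evacuation n) (promotion n) (promotion n)⁻¹ :=
    semiconjBy_evacuationProd (toggle_mul_self n) (commute_toggle n) _
  simpa using (h.inv_right.pow_right i).eq.symm

theorem getLast?_promotion_pow (hn : 0 < n) {i : ℕ} (hi : 0 < i) (w : KrewerasWord n) :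
    ((promotion n ^ i) w).1.getLast? = some (keps w i) := by
  obtain ⟨i, rfl⟩ := Nat.exists_eq_add_of_le' hi
  rw [coe_promotion_pow hn, Function.iterate_succ_apply', pro, List.getLast?_concat]
  rfl

theorem getLast?_evacuation (w : KrewerasWord n) :
    (evacuation n w).1.getLast? = (promotion n w).1.getLast? := by
  rw [List.getLast?_eq_getElem?, List.getLast?_eq_getElem?, (evacuation n w).2.length_eq,
    (promotion n w).2.length_eq, evacuation, promotion]
  cases 3 * n - 1 with
  | zero => rfl
  | succ k =>
    rw [evacuationProd, Equiv.Perm.mul_apply, coe_evacuationProd_toggle,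
      getElem?_evacAux_of_lt k.lt_succ_self]

theorem IsKrewerasWord.ne_A_of_concat {l : List KLetter} {L : KLetter}
    (hw : IsKrewerasWord n (l ++ [L])) : L ≠ A := by
  rintro rfl
  have hA := hw.count_eq A
  have hB := hw.count_eq B
  have := (isBallot_append_singleton.1 hw.isBallot).1.count_le B
  simp at hA hB
  lia

theorem getLast?_promotion_pow_three_mul (hn : 0 < n) (w : KrewerasWord n) :
    ((promotion n ^ (3 * n)) w).1.getLast? = w.1.getLast?.map negL := by
  obtain ⟨w, hw⟩ := w
  have hlen := hw.length_eq
  rcases List.eq_nil_or_concat' w with rfl | ⟨l, L, rfl⟩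
  · simp at hlen
    lia
  have hl : l.length = 3 * n - 1 := by
    rw [← hlen]
    simp
  have hcolor : HasColor ((l ++ [L]).drop l.length) (negL L) := by
    rw [List.drop_left]
    exact .letter hw.ne_A_of_concat []
  have hkeps := (hcolor.iterate_pro hn hw).keps_one (hw.iterate_pro hn _)
  rw [getLast?_promotion_pow hn (by lia), List.getLast?_concat, Option.map_some, ← hkeps, hl]
  rfl

theorem getLast?_promotion_pow_evacuation (i : ℕ) (w : KrewerasWord n) :
    ((promotion n ^ (i + 1)) (evacuation n w)).1.getLast? =
      ((promotion n ^ i)⁻¹ w).1.getLast? := by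
  have h : promotion n ^ (i + 1) * evacuation n = evacuation n * (promotion n ^ (i + 1))⁻¹ :=
    promotion_pow_mul_evacuation n (i + 1)
  have hinv : promotion n * (promotion n ^ (i + 1))⁻¹ = (promotion n ^ i)⁻¹ := by group
  rw [← Equiv.Perm.mul_apply, h, Equiv.Perm.mul_apply, getLast?_evacuation,
    ← Equiv.Perm.mul_apply, hinv]

theorem getLast?_promotion_pow_sub (hn : 0 < n) {i : ℕ} (hi : i ≤ 3 * n) (w : KrewerasWord n) :
    ((promotion n ^ (3 * n - i)) w).1.getLast? =
      ((promotion n ^ i)⁻¹ w).1.getLast?.map negL := by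
  rw [← getLast?_promotion_pow_three_mul hn, ← Equiv.Perm.mul_apply, pow_sub _ hi]

end Permutations

/-- `ε_{evac(w)}(i) = -ε_w(3n+1-i)` for all `i ∈ {1, …, 3n}`, where `-B = C`
and `-C = B`. -/
theorem keps_evac (n : ℕ) (w : List KLetter) (hw : IsKrewerasWord n w) :
    ∀ i : ℕ, 1 ≤ i → i ≤ 3 * n →
      keps (evac n w) i = negL (keps w (3 * n + 1 - i)) := by
  intro i hi hi'
  obtain ⟨i, rfl⟩ := Nat.exists_eq_add_of_le' hi
  have hn : 0 < n := by lia
  lift w to KrewerasWord n using hw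
  have hevac : some (keps (evac n w) (i + 1)) = ((promotion n ^ i)⁻¹ w).1.getLast? := by
    rw [← coe_evacuation, ← getLast?_promotion_pow hn i.succ_pos,
      getLast?_promotion_pow_evacuation]
  have hpro : some (keps w (3 * n - i)) = ((promotion n ^ i)⁻¹ w).1.getLast?.map negL := by
    rw [← getLast?_promotion_pow hn (by lia), getLast?_promotion_pow_sub hn (by lia)]
  rw [← hevac, Option.map_some, Option.some_inj] at hpro
  rw [Nat.add_sub_add_right, hpro, negL_negL]
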